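/- There exists a constant C > 0 such that for every real number h, ∫_ℝ |e^{iξh} − 1|² / (ξ² + 1) dξ ≤ C |h|. (Consequently, the map x ↦ √R₀(κ) δₓ is ½-Hölder continuous from ℝ into L²(ℝ).) -/

import Mathlib

open MeasureTheory

/-!
Since `|e^{ix} - 1| ≤ min (|x|, 2)`, one has `|e^{ix} - 1|² ≤ 5x² / (1 + x²)`. At `x = hξ` the
factor `ξ²` is absorbed by the denominator `ξ² + κ²`, and what remains is five times the function
`h² / (1 + (hξ)²)`, a rescaled Cauchy density of integral `π |h|`. The resulting bound `5π |h|`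
does not depend on `κ`.
-/

lemma integrable_sq_mul_inv_one_add_mul_sq (h : ℝ) :
    Integrable fun ξ : ℝ => h ^ 2 * (1 + (h * ξ) ^ 2)⁻¹ := by
  rcases eq_or_ne h 0 with rfl | hh
  · simp
  · exact (integrable_inv_one_add_sq.comp_mul_left' hh).const_mul _

lemma integral_sq_mul_inv_one_add_mul_sq (h : ℝ) :
    ∫ ξ : ℝ, h ^ 2 * (1 + (h * ξ) ^ 2)⁻¹ = Real.pi * |h| := by
  rcases eq_or_ne h 0 with rfl | hh
  · simp
  · have habs : |h| ≠ 0 := abs_ne_zero.mpr hh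
    calc ∫ ξ : ℝ, h ^ 2 * (1 + (h * ξ) ^ 2)⁻¹
        = |h| ^ 2 * (|h|⁻¹ * Real.pi) := by
          rw [integral_const_mul, Measure.integral_comp_mul_left (fun x : ℝ => (1 + x ^ 2)⁻¹),
            integral_univ_inv_one_add_sq, smul_eq_mul, abs_inv, sq_abs]
      _ = Real.pi * |h| := by field_simp

lemma norm_exp_I_mul_ofReal_sub_one_le_two (x : ℝ) :
    ‖Complex.exp (Complex.I * x) - 1‖ ≤ 2 :=
  calc ‖Complex.exp (Complex.I * x) - 1‖
      ≤ ‖Complex.exp (Complex.I * x)‖ + ‖(1 : ℂ)‖ := norm_sub_le _ _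
    _ = 2 := by rw [Complex.norm_exp_I_mul_ofReal, norm_one, one_add_one_eq_two]

lemma norm_exp_I_mul_ofReal_sub_one_sq_le (x : ℝ) :
    ‖Complex.exp (Complex.I * x) - 1‖ ^ 2 ≤ 5 * x ^ 2 * (1 + x ^ 2)⁻¹ := by
  have le_sq : ‖Complex.exp (Complex.I * x) - 1‖ ^ 2 ≤ x ^ 2 :=
    sq_le_sq.mpr <| (abs_norm _).trans_le Real.norm_exp_I_mul_ofReal_sub_one_le
  have le_four : ‖Complex.exp (Complex.I * x) - 1‖ ^ 2 ≤ 2 ^ 2 :=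
    pow_le_pow_left₀ (norm_nonneg _) (norm_exp_I_mul_ofReal_sub_one_le_two x) 2
  rw [← div_eq_mul_inv, le_div_iff₀ (by positivity)]
  calc ‖Complex.exp (Complex.I * x) - 1‖ ^ 2 * (1 + x ^ 2)
      = ‖Complex.exp (Complex.I * x) - 1‖ ^ 2
          + ‖Complex.exp (Complex.I * x) - 1‖ ^ 2 * x ^ 2 := by ring
    _ ≤ x ^ 2 + 2 ^ 2 * x ^ 2 := by gcongr
    _ = 5 * x ^ 2 := by ring

lemma norm_exp_sub_one_sq_div_sq_add_sq_le (κ h ξ : ℝ) :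
    ‖Complex.exp (Complex.I * (ξ : ℂ) * (h : ℂ)) - 1‖ ^ 2 / (ξ ^ 2 + κ ^ 2) ≤
      5 * (h ^ 2 * (1 + (h * ξ) ^ 2)⁻¹) := by
  have arg_eq : Complex.I * (ξ : ℂ) * (h : ℂ) = Complex.I * ((h * ξ : ℝ) : ℂ) := by
    push_cast; ring
  have ratio_le_one : ξ ^ 2 / (ξ ^ 2 + κ ^ 2) ≤ 1 :=
    div_le_one_of_le₀ (le_add_of_nonneg_right (sq_nonneg κ)) (by positivity)
  calc ‖Complex.exp (Complex.I * (ξ : ℂ) * (h : ℂ)) - 1‖ ^ 2 / (ξ ^ 2 + κ ^ 2)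
      ≤ 5 * (h * ξ) ^ 2 * (1 + (h * ξ) ^ 2)⁻¹ / (ξ ^ 2 + κ ^ 2) := by
        rw [arg_eq]
        gcongr
        exact norm_exp_I_mul_ofReal_sub_one_sq_le (h * ξ)
    _ = 5 * (h ^ 2 * (1 + (h * ξ) ^ 2)⁻¹) * (ξ ^ 2 / (ξ ^ 2 + κ ^ 2)) := by ring
    _ ≤ 5 * (h ^ 2 * (1 + (h * ξ) ^ 2)⁻¹) := mul_le_of_le_one_right (by positivity) ratio_le_one

lemma integrable_norm_exp_sub_one_sq_div_sq_add_sq (κ h : ℝ) :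
    Integrable fun ξ : ℝ =>
      ‖Complex.exp (Complex.I * (ξ : ℂ) * (h : ℂ)) - 1‖ ^ 2 / (ξ ^ 2 + κ ^ 2) := by
  refine ((integrable_sq_mul_inv_one_add_mul_sq h).const_mul 5).mono'
    (Measurable.aestronglyMeasurable (by fun_prop)) (.of_forall fun ξ => ?_)
  rw [Real.norm_of_nonneg (by positivity)]
  exact norm_exp_sub_one_sq_div_sq_add_sq_le κ h ξ

theorem stmt7_general (κ h : ℝ) :
    ∫ ξ : ℝ, ‖Complex.exp (Complex.I * (ξ : ℂ) * (h : ℂ)) - 1‖ ^ 2 / (ξ ^ 2 + κ ^ 2) ≤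
      5 * Real.pi * |h| :=
  calc ∫ ξ : ℝ, ‖Complex.exp (Complex.I * (ξ : ℂ) * (h : ℂ)) - 1‖ ^ 2 / (ξ ^ 2 + κ ^ 2)
      ≤ ∫ ξ : ℝ, 5 * (h ^ 2 * (1 + (h * ξ) ^ 2)⁻¹) :=
        integral_mono (integrable_norm_exp_sub_one_sq_div_sq_add_sq κ h)
          ((integrable_sq_mul_inv_one_add_mul_sq h).const_mul 5)
          (norm_exp_sub_one_sq_div_sq_add_sq_le κ h)
    _ = 5 * Real.pi * |h| := by
        rw [integral_const_mul, integral_sq_mul_inv_one_add_mul_sq, mul_assoc]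

/-- `∫ |e^{iξh} − 1|²/(ξ²+1) dξ ≲ |h|`; consequently `x ↦ √R₀(κ) δₓ`
is ½-Hölder continuous into `L²`. -/
theorem stmt7 : ∃ C : ℝ, 0 < C ∧ ∀ h : ℝ,
    ∫ ξ : ℝ, ‖Complex.exp (Complex.I * (ξ : ℂ) * (h : ℂ)) - 1‖ ^ 2 / (ξ ^ 2 + 1) ≤
      C * |h| :=
  ⟨5 * Real.pi, by positivity, fun h => by simpa only [one_pow] using stmt7_general 1 h⟩
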